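/- arXiv:1406.3299 — 3 statements merged into one kernel-verified Lean document; each statement's English description precedes it below -/
import Mathlib

section
/- For every nonnegative integer n, p(5n+4) ≡ 0 (mod 5). -/
open Finset

namespace QSeries

section Ring

variable {R : Type*} [CommRing R]

/-- The Gaussian binomial coefficient at `q`. -/
def qBinom (q : R) : ℕ → ℕ → R
  | _, 0 => 1
  | 0, _ + 1 => 0
  | m + 1, i + 1 => qBinom q m i + q ^ (i + 1) * qBinom q m (i + 1)

/-- The finite product `(1 - q) (1 - q ^ 2) ⋯ (1 - q ^ n)`. -/
def qPoch (q : R) (n : ℕ) : R := ∏ k ∈ range n, (1 - q ^ (k + 1))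

@[simp]
lemma qBinom_zero_right (q : R) (m : ℕ) : qBinom q m 0 = 1 := by
  cases m <;> rfl

lemma qBinom_succ_succ (q : R) (m i : ℕ) :
    qBinom q (m + 1) (i + 1) = qBinom q m i + q ^ (i + 1) * qBinom q m (i + 1) := rfl

lemma qBinom_eq_zero_of_lt (q : R) {m i : ℕ} (h : m < i) : qBinom q m i = 0 := by
  induction m generalizing i with
  | zero => obtain ⟨i, rfl⟩ := Nat.exists_eq_succ_of_ne_zero h.ne'; rfl
  | succ m ih =>
    obtain ⟨i, rfl⟩ := Nat.exists_eq_succ_of_ne_zero (Nat.ne_zero_of_lt h)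
    rw [Nat.succ_eq_add_one, qBinom_succ_succ, ih (by omega), ih (by omega)]
    simp

lemma map_qBinom {S : Type*} [CommRing S] (f : R →+* S) (q : R) (m i : ℕ) :
    f (qBinom q m i) = qBinom (f q) m i := by
  induction m generalizing i with
  | zero => cases i <;> simp [qBinom]
  | succ m ih => cases i <;> simp [qBinom_succ_succ, ih]

lemma qPoch_succ (q : R) (n : ℕ) : qPoch q (n + 1) = qPoch q n * (1 - q ^ (n + 1)) :=
  prod_range_succ _ _

@[simp]
lemma qPoch_zero (q : R) : qPoch q 0 = 1 := rfl

lemma qBinom_mul_qPoch_mul_qPoch (q : R) (i j : ℕ) :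
    qBinom q (i + j) i * (qPoch q i * qPoch q j) = qPoch q (i + j) := by
  induction i generalizing j with
  | zero => simp
  | succ i ihi =>
    induction j with
    | zero =>
      have h := ihi 0
      simp only [add_zero, qPoch_zero, mul_one] at h ⊢
      rw [qBinom_succ_succ, qBinom_eq_zero_of_lt q (Nat.lt_succ_self i), qPoch_succ]
      linear_combination (1 - q ^ (i + 1)) * h
    | succ j ihj =>
      have h := ihi (j + 1)
      rw [show i + 1 + (j + 1) = i + (j + 1) + 1 by ring, qBinom_succ_succ, qPoch_succ q (i + _)]
      rw [show i + 1 + j = i + (j + 1) by ring] at ihj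
      simp only [qPoch_succ q i, qPoch_succ q j] at h ihj ⊢
      linear_combination (1 - q ^ (i + 1)) * h + q ^ (i + 1) * (1 - q ^ (j + 1)) * ihj

/-- The homogeneous form of the `q`-binomial theorem. -/
lemma prod_sub_mul_pow_eq_sum (q y z : R) (m : ℕ) :
    ∏ k ∈ range m, (y - z * q ^ k) =
      ∑ p ∈ antidiagonal m,
        (-1) ^ p.1 * q ^ p.1.choose 2 * qBinom q m p.1 * z ^ p.1 * y ^ p.2 := by
  induction m generalizing z with
  | zero => simp
  | succ m ih =>
    have hshift : ∀ k, y - z * q ^ (k + 1) = y - z * q * q ^ k := fun k ↦ by ring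
    have hlast : ∑ p ∈ antidiagonal (m + 1),
        (-1) ^ p.1 * q ^ p.1.choose 2 * (q ^ p.1 * qBinom q m p.1) * z ^ p.1 * y ^ p.2 =
        ∑ p ∈ antidiagonal m,
        (-1) ^ p.1 * q ^ p.1.choose 2 * qBinom q m p.1 * (z * q) ^ p.1 * y ^ p.2 * y := by
      rw [Nat.sum_antidiagonal_succ', qBinom_eq_zero_of_lt q (Nat.lt_succ_self m)]
      simp only [mul_zero, zero_mul, zero_add]
      exact sum_congr rfl fun p _ ↦ by ring
    rw [prod_range_succ']
    simp_rw [hshift]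
    rw [ih, pow_zero, mul_one, mul_sub, sum_mul, ← hlast, Nat.sum_antidiagonal_succ,
      Nat.sum_antidiagonal_succ, sum_mul, add_sub_assoc, ← sum_sub_distrib]
    congr 1
    · simp
    · refine sum_congr rfl fun p _ ↦ ?_
      rw [qBinom_succ_succ, Nat.choose_succ_succ' p.1 1, Nat.choose_one_right]
      ring

lemma two_mul_cast_choose_two (k : ℕ) : 2 * (k.choose 2 : ℤ) = k * (k - 1) := by
  induction k with
  | zero => simp
  | succ k ih =>
    rw [Nat.choose_succ_succ' k 1, Nat.choose_one_right]
    push_cast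
    linear_combination ih

lemma prod_pow_sub_pow_lt (q : R) (n : ℕ) :
    ∏ k ∈ range n, (q ^ n - q ^ k) = (-1) ^ n * q ^ n.choose 2 * qPoch q n := by
  induction n with
  | zero => simp
  | succ n ih =>
    have hshift : ∀ k, q ^ (n + 1) - q ^ (k + 1) = q * (q ^ n - q ^ k) := fun k ↦ by ring
    rw [prod_range_succ']
    simp_rw [hshift]
    rw [prod_mul_distrib, ih, prod_const, card_range, qPoch_succ, Nat.choose_succ_succ' n 1,
      Nat.choose_one_right]
    ring

lemma prod_pow_sub_pow_gt (q : R) (n : ℕ) :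
    ∏ k ∈ range n, (q ^ n - q ^ (n + 1 + k)) = q ^ (n * n) * qPoch q n := by
  have hfactor : ∀ k, q ^ n - q ^ (n + 1 + k) = q ^ n * (1 - q ^ (k + 1)) := fun k ↦ by ring
  simp_rw [hfactor]
  rw [prod_mul_distrib, prod_const, card_range, ← pow_mul, qPoch]

open Polynomial in
lemma sum_mul_qBinom_eq (q : R) (n : ℕ) :
    ∑ p ∈ antidiagonal (2 * n + 1),
      (-1) ^ p.1 * p.1 * q ^ (p.1.choose 2 + n * p.2) * qBinom q (2 * n + 1) p.1 =
    (-1) ^ (n + 1) * q ^ (n.choose 2 + n * n + n) * qPoch q n ^ 2 := by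
  have hmid : C (q ^ n) - X * C q ^ n = C (q ^ n) * (1 - X) := by rw [C_pow]; ring
  have h := congrArg (fun f ↦ (derivative f).eval 1)
    (prod_sub_mul_pow_eq_sum (C q) (C (q ^ n)) (X : R[X]) (n + 1 + n))
  rw [prod_range_add, prod_range_succ, hmid] at h
  simp only [derivative_mul, derivative_sum, eval_finsetSum, ← map_qBinom] at h
  simp [eval_prod, prod_pow_sub_pow_lt, prod_pow_sub_pow_gt, derivative_pow] at h
  rw [show 2 * n + 1 = n + 1 + n by ring]
  calc
    _ = ∑ p ∈ antidiagonal (n + 1 + n), (-1) ^ p.1 * q ^ p.1.choose 2 *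
          qBinom q (n + 1 + n) p.1 * (p.1 : R) * (q ^ n) ^ p.2 :=
      sum_congr rfl fun p _ ↦ by ring
    _ = _ := by rw [← h]; ring

lemma jacobi_term (q : R) (l d : ℕ) (b : R) :
    (-1) ^ d * (d : R) * q ^ (d.choose 2 + (l + d) * (2 * l + d + 1)) * b +
      (-1) ^ (2 * l + d + 1) * ((2 * l + d + 1 : ℕ) : R) *
        q ^ ((2 * l + d + 1).choose 2 + (l + d) * d) * b =
    (-1) ^ (l + d + 1) * q ^ ((l + d).choose 2 + (l + d) * (l + d) + (l + d)) *
      ((-1) ^ l * (2 * l + 1) * q ^ (l + 1).choose 2 * b) := by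
  have h1 := two_mul_cast_choose_two d
  have h2 := two_mul_cast_choose_two (2 * l + d + 1)
  have h3 := two_mul_cast_choose_two (l + d)
  have h4 := two_mul_cast_choose_two (l + 1)
  push_cast at h1 h2 h3 h4
  have e1 : d.choose 2 + (l + d) * (2 * l + d + 1) =
      (l + d).choose 2 + (l + d) * (l + d) + (l + d) + (l + 1).choose 2 := by
    zify
    linarith
  have e2 : (2 * l + d + 1).choose 2 + (l + d) * d =
      (l + d).choose 2 + (l + d) * (l + d) + (l + d) + (l + 1).choose 2 := by
    zify
    linarith
  have hsq : ((-1 : R) ^ l) ^ 2 = 1 := by rw [← pow_mul, mul_comm, pow_mul]; simp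
  rw [e1, e2, pow_add q _ ((l + 1).choose 2)]
  push_cast
  linear_combination -((-1) ^ d * d * b * q ^ (l + 1).choose 2 *
    q ^ ((l + d).choose 2 + (l + d) * (l + d) + (l + d))) * hsq

end Ring

section Domain

variable {R : Type*} [CommRing R] [IsDomain R]

lemma qBinom_symm {q : R} (hq : ∀ n, qPoch q n ≠ 0) (i j : ℕ) :
    qBinom q (i + j) i = qBinom q (i + j) j := by
  have h1 := qBinom_mul_qPoch_mul_qPoch q i j
  have h2 := qBinom_mul_qPoch_mul_qPoch q j i
  rw [add_comm j i, mul_comm (qPoch q j)] at h2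
  exact mul_right_cancel₀ (mul_ne_zero (hq i) (hq j)) (h1.trans h2.symm)

/-- A finite form of Jacobi's identity for the cube of Euler's product. -/
lemma qPoch_sq_eq_sum {q : R} (hq0 : q ≠ 0) (hq : ∀ n, qPoch q n ≠ 0) (n : ℕ) :
    qPoch q n ^ 2 = ∑ l ∈ range (n + 1),
      (-1) ^ l * (2 * l + 1) * q ^ (l + 1).choose 2 * qBinom q (2 * n + 1) (n - l) := by
  have h := sum_mul_qBinom_eq q n
  rw [Nat.sum_antidiagonal_eq_sum_range_succ_mk,
    show (2 * n + 1).succ = n + 1 + (n + 1) by simp; ring, sum_range_add,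
    ← sum_range_reflect _ (n + 1), ← sum_add_distrib] at h
  refine mul_left_cancel₀ (mul_ne_zero (pow_ne_zero (n + 1) (neg_ne_zero.mpr one_ne_zero))
    (pow_ne_zero (n.choose 2 + n * n + n) hq0)) ?_
  rw [← h, mul_sum]
  refine sum_congr rfl fun l hl ↦ ?_
  obtain ⟨d, rfl⟩ := Nat.exists_eq_add_of_le (Nat.lt_succ_iff.mp (mem_range.mp hl))
  rw [show l + d + 1 - 1 - l = d by omega, show 2 * (l + d) + 1 - d = 2 * l + d + 1 by omega,
    show l + d + 1 + l = 2 * l + d + 1 by omega, show l + d - l = d by omega,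
    show 2 * (l + d) + 1 - (2 * l + d + 1) = d by omega, ← jacobi_term,
    show 2 * (l + d) + 1 = d + (2 * l + d + 1) by omega, qBinom_symm hq d]

end Domain

section PowerSeries

open PowerSeries

variable (K : Type*) [Field K]

lemma X_pow_dvd_qPoch_sub {M n : ℕ} (h : M ≤ n) :
    (X : K⟦X⟧) ^ M ∣ qPoch X n - pentagonalSeries K := by
  rw [X_pow_dvd_iff]
  intro d hd
  obtain ⟨s, hs⟩ := Filter.eventually_atTop.mp (coeff_prod_one_sub_X_pow_eventually_eq K d)
  have hstable : ∀ t, (X : K⟦X⟧) ^ M ∣ qPoch X (n + t) - qPoch X n := by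
    intro t
    induction t with
    | zero => simp
    | succ t ih =>
      rw [← add_assoc, qPoch_succ, mul_sub, mul_one, sub_right_comm]
      exact ih.sub ((pow_dvd_pow _ (by omega)).mul_left _)
  have h1 := X_pow_dvd_iff.mp (hstable (s.sup id + 1)) d hd
  have h2 := hs (range (n + (s.sup id + 1))) fun i hi ↦ by
    have := le_sup (f := id) hi
    simp only [id, mem_range] at this ⊢
    omega
  rw [map_sub, sub_eq_zero] at h1 ⊢
  rw [← h1, ← h2, qPoch]

lemma constantCoeff_qPoch (n : ℕ) : constantCoeff (qPoch (X : K⟦X⟧) n) = 1 := by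
  simp [qPoch, map_prod]

lemma constantCoeff_pentagonalSeries : constantCoeff (pentagonalSeries K) = 1 := by
  have h := coeff_pentagonalSeries_pentagonal K 0
  simpa [pentagonal_def] using h

/-- Jacobi's identity for the cube of Euler's product, modulo a power of the variable. -/
lemma X_pow_dvd_pentagonalSeries_pow_three_sub (M : ℕ) :
    (X : K⟦X⟧) ^ M ∣ pentagonalSeries K ^ 3 - ∑ l ∈ range (2 * M + 1),
      ((-1) ^ l * (2 * (l : K⟦X⟧) + 1) * X ^ (l + 1).choose 2) := by
  set E := pentagonalSeries K
  have hfin := qPoch_sq_eq_sum (q := (X : K⟦X⟧)) X_ne_zero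
    (fun n h ↦ by simpa [h] using constantCoeff_qPoch K n) (2 * M)
  let π := Ideal.Quotient.mk (Ideal.span {(X : K⟦X⟧) ^ M})
  have hπ : ∀ {a b : K⟦X⟧}, π a = π b ↔ X ^ M ∣ a - b := by
    intro a b
    rw [Ideal.Quotient.eq, Ideal.mem_span_singleton]
  have hP : ∀ {n}, M ≤ n → π (qPoch X n) = π E := fun h ↦ hπ.mpr (X_pow_dvd_qPoch_sub K h)
  have hE : IsUnit (π E) := by
    refine IsUnit.map π (isUnit_iff_constantCoeff.mpr ?_)
    rw [constantCoeff_pentagonalSeries]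
    exact isUnit_one
  rw [← hπ, pow_succ, map_mul, map_pow, ← hP (n := 2 * M) (by omega), ← map_pow, hfin, map_sum,
    map_sum, sum_mul]
  refine sum_congr rfl fun l hl ↦ ?_
  rw [map_mul π _ (qBinom _ _ _), mul_assoc]
  rcases le_or_gt M ((l + 1).choose 2) with hM | hM
  · have hX : π (X ^ (l + 1).choose 2) = 0 := by
      rw [← map_zero π, hπ, sub_zero]
      exact pow_dvd_pow _ hM
    rw [map_mul, hX]
    simp
  · have hlM : l < M := by
      rw [Nat.choose_succ_succ' l 1, Nat.choose_one_right] at hM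
      omega
    have hbin := congrArg π (qBinom_mul_qPoch_mul_qPoch (X : K⟦X⟧) (2 * M - l) (2 * M + 1 + l))
    rw [show 2 * M - l + (2 * M + 1 + l) = 2 * (2 * M) + 1 by omega, map_mul, map_mul,
      hP (by omega), hP (by omega), hP (by omega), ← mul_assoc] at hbin
    rw [hP (by omega), hE.mul_eq_right.mp hbin, mul_one]

lemma exists_choose_two_of_coeff_pow_three_ne_zero {d : ℕ}
    (h : coeff d (pentagonalSeries K ^ 3) ≠ 0) :
    ∃ l : ℕ, d = (l + 1).choose 2 ∧ (2 * l + 1 : K) ≠ 0 := by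
  have hd := X_pow_dvd_iff.mp (X_pow_dvd_pentagonalSeries_pow_three_sub K (d + 1)) d (by omega)
  rw [map_sub, sub_eq_zero] at hd
  rw [hd, map_sum] at h
  obtain ⟨l, -, hl⟩ := exists_ne_zero_of_sum_ne_zero h
  have hC : ((-1) ^ l * (2 * l + 1) : K⟦X⟧) = C ((-1) ^ l * (2 * l + 1) : K) := by
    simp [map_ofNat C 2]
  rw [hC, coeff_C_mul, coeff_X_pow] at hl
  refine ⟨l, ?_, ?_⟩
  · by_contra hne
    simp [hne] at hl
  · rintro h0
    simp [h0] at hl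

end PowerSeries

section Partition

open PowerSeries

variable (K : Type*) [Field K]

open scoped PowerSeries.WithPiTopology in
lemma pentagonalSeries_mul_mk_card_partition :
    pentagonalSeries K * PowerSeries.mk (fun n ↦ (Fintype.card (Nat.Partition n) : K)) = 1 := by
  let : TopologicalSpace K := ⊥
  have : DiscreteTopology K := ⟨rfl⟩
  have h1 := WithPiTopology.hasProd_one_sub_X_pow K
  have h2 := Nat.Partition.hasProd_powerSeriesMk_card_restricted K (fun _ ↦ True)
  have h3 := h1.mul h2
  have hone : ∀ i : ℕ, (1 - X ^ (i + 1) : K⟦X⟧) *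
      (if True then ∑' j : ℕ, X ^ ((i + 1) * j) else 1) = 1 := by
    intro i
    simp_rw [if_true, pow_mul]
    exact WithPiTopology.one_sub_mul_tsum_pow_of_constantCoeff_eq_zero (by simp)
  simp_rw [hone] at h3
  have h4 := h3.unique hasProd_one
  simpa [Nat.Partition.restricted] using h4

lemma coeff_pentagonalSeries_pow_four_eq_zero (n : ℕ) :
    coeff (5 * n + 4) (pentagonalSeries (ZMod 5) ^ 4) = 0 := by
  have hquad : ∀ x y z : ZMod 5,
      x * (3 * x - 1) + (y + 1) * y = 2 * (5 * z + 4) → 2 * y + 1 = 0 := by decide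
  have : Fact (Nat.Prime 5) := ⟨by norm_num⟩
  rw [pow_succ', coeff_mul]
  refine sum_eq_zero fun ⟨a, b⟩ hab ↦ ?_
  by_contra h
  obtain ⟨l, hl, hl0⟩ :=
    exists_choose_two_of_coeff_pow_three_ne_zero (ZMod 5) (right_ne_zero_of_mul h)
  have hmem : a ∈ Set.range pentagonal := by
    by_contra hn
    exact left_ne_zero_of_mul h (coeff_pentagonalSeries_eq_zero _ hn)
  obtain ⟨k, rfl⟩ := hmem
  simp only [HasAntidiagonal.mem_antidiagonal] at hab hl
  have hsum : k * (3 * k - 1) + (l + 1) * l = 2 * (5 * n + 4) := by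
    have hpent := two_mul_natCast_pentagonal k
    have htri := two_mul_cast_choose_two (l + 1)
    zify at hab hl
    rw [← hl] at htri
    push_cast at htri
    linear_combination 2 * hab - hpent - htri
  have hmod := congrArg (Int.cast : ℤ → ZMod 5) hsum
  push_cast at hmod
  exact hl0 (hquad _ _ _ hmod)

end Partition

end QSeries

open QSeries PowerSeries in
/-- Ramanujan's congruence: `p(5n+4) ≡ 0 (mod 5)`, where the partition function
`p(m)` is the number of partitions of `m`. -/
theorem ramanujan_congruence_mod_five (n : ℕ) :
    Nat.card (Nat.Partition (5 * n + 4)) % 5 = 0 := by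
  have : Fact (Nat.Prime 5) := ⟨by norm_num⟩
  set P : (ZMod 5)⟦X⟧ := PowerSeries.mk fun n ↦ (Fintype.card (Nat.Partition n) : ZMod 5) with hP
  have hEP := pentagonalSeries_mul_mk_card_partition (ZMod 5)
  have hfrob : P ^ 5 = expand 5 (by norm_num) P := by
    have h := MvPowerSeries.map_frobenius_expand 5 (by norm_num) (f := P)
    rw [ZMod.frobenius_zmod, MvPowerSeries.map_id] at h
    exact h.symm
  have hPeq : P = expand 5 (by norm_num) P * pentagonalSeries (ZMod 5) ^ 4 := by
    rw [← hfrob, pow_succ', mul_assoc, ← mul_pow, mul_comm P (pentagonalSeries _), hEP, one_pow,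
      mul_one]
  have hcoeff : coeff (5 * n + 4) P = 0 := by
    rw [hPeq, coeff_mul]
    refine sum_eq_zero fun ⟨a, b⟩ hab ↦ ?_
    simp only [HasAntidiagonal.mem_antidiagonal] at hab
    by_cases h5 : 5 ∣ a
    · obtain ⟨c, rfl⟩ := h5
      rw [show b = 5 * (n - c) + 4 by omega, coeff_pentagonalSeries_pow_four_eq_zero, mul_zero]
    · rw [coeff_expand_of_not_dvd _ _ _ h5, zero_mul]
  rw [hP, coeff_mk, ZMod.natCast_eq_zero_iff] at hcoeff
  rw [Nat.card_eq_fintype_card]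
  exact Nat.mod_eq_zero_of_dvd hcoeff
end

section
/- For every nonnegative integer n, p(7n+5) ≡ 0 (mod 7). -/
open PowerSeries Finset

namespace RamanujanCongruence

/-- The finite Euler product `(1 - X)(1 - X ^ 2) ⋯ (1 - X ^ n)`. -/
noncomputable def eulerProd (R : Type*) [CommRing R] (n : ℕ) : R⟦X⟧ :=
  ∏ i ∈ range n, (1 - X ^ (i + 1))

/-- The coefficients of a finite form of Jacobi's identity. In closed form, `jacobiCoeff R n m` is
`(-1) ^ m * X ^ (m * (m + 1) / 2)` times the Gaussian binomial coefficient of `2 * n + 1` over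
`n - m`. -/
noncomputable def jacobiCoeff (R : Type*) [CommRing R] : ℕ → ℕ → R⟦X⟧
  | 0, 0 => 1
  | 0, _ + 1 => 0
  | n + 1, 0 => (1 + X ^ (n + 1) + (X ^ (n + 1)) ^ 2) * jacobiCoeff R n 0
      - X ^ (n + 1) * jacobiCoeff R n 1
  | n + 1, m + 1 => (1 + (X ^ (n + 1)) ^ 2) * jacobiCoeff R n (m + 1)
      - X ^ (n + 1) * (jacobiCoeff R n m + jacobiCoeff R n (m + 2))

/-- A truncation of the series `∑ (-1) ^ m * (2 * m + 1) * X ^ (m * (m + 1) / 2)`. -/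
noncomputable def jacobiSum (R : Type*) [CommRing R] (n : ℕ) : R⟦X⟧ :=
  ∑ m ∈ range n, C ((-1) ^ m * (2 * m + 1) : R) * X ^ (m * (m + 1) / 2)

section Jacobi

variable {R : Type*} [CommRing R]

@[simp]
lemma eulerProd_zero : eulerProd R 0 = 1 := by simp [eulerProd]

lemma eulerProd_succ (n : ℕ) :
    eulerProd R (n + 1) = eulerProd R n * (1 - X ^ (n + 1)) := prod_range_succ _ _

lemma isUnit_eulerProd (n : ℕ) : IsUnit (eulerProd R n) := by
  simp [isUnit_iff_constantCoeff, eulerProd]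

lemma X_pow_dvd_eulerProd_sub {m n : ℕ} (h : m ≤ n) :
    X ^ (m + 1) ∣ eulerProd R n - eulerProd R m := by
  induction n, h using Nat.le_induction with
  | base => simp
  | succ n h ih =>
    have e : eulerProd R (n + 1) - eulerProd R m =
        (eulerProd R n - eulerProd R m) - X ^ (n + 1) * eulerProd R n := by
      rw [eulerProd_succ]; ring
    rw [e]
    exact dvd_sub ih (dvd_mul_of_dvd_left (pow_dvd_pow _ (by lia)) _)

lemma jacobiCoeff_eq_zero {n m : ℕ} (h : n < m) : jacobiCoeff R n m = 0 := by
  induction n generalizing m with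
  | zero =>
    obtain ⟨m, rfl⟩ := Nat.exists_eq_add_one_of_ne_zero h.ne'
    simp [jacobiCoeff]
  | succ n ih =>
    obtain ⟨m, rfl⟩ := Nat.exists_eq_add_one_of_ne_zero (by lia : m ≠ 0)
    simp [jacobiCoeff, ih (m := m) (by lia), ih (m := m + 1) (by lia), ih (m := m + 2) (by lia)]

lemma sum_jacobiCoeff_succ (n M : ℕ) :
    ∑ m ∈ range (M + 1), (2 * m + 1 : R⟦X⟧) * jacobiCoeff R (n + 1) m =
      (1 - X ^ (n + 1)) ^ 2 * ∑ m ∈ range (M + 1), (2 * m + 1 : R⟦X⟧) * jacobiCoeff R n m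
      + X ^ (n + 1) * ((2 * M + 3 : R⟦X⟧) * jacobiCoeff R n M
        - (2 * M + 1 : R⟦X⟧) * jacobiCoeff R n (M + 1)) := by
  induction M with
  | zero => simp [jacobiCoeff]; ring
  | succ M ih =>
    rw [sum_range_succ, ih, sum_range_succ _ (M + 1), jacobiCoeff]
    push_cast
    ring

lemma sum_jacobiCoeff (n : ℕ) :
    ∑ m ∈ range (n + 1), (2 * m + 1 : R⟦X⟧) * jacobiCoeff R n m = eulerProd R n ^ 2 := by
  induction n with
  | zero => simp [jacobiCoeff]
  | succ n ih =>
    rw [sum_jacobiCoeff_succ, sum_range_succ, ih, jacobiCoeff_eq_zero (by lia : n < n + 1),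
      jacobiCoeff_eq_zero (by lia : n < n + 1 + 1), eulerProd_succ]
    ring

lemma triangle_succ (m : ℕ) : (m + 1) * (m + 1 + 1) / 2 = m * (m + 1) / 2 + (m + 1) := by
  rw [← Nat.add_mul_div_left _ _ two_pos]
  ring_nf

lemma jacobiCoeff_mul_eulerProd (m k : ℕ) :
    jacobiCoeff R (m + k) m * eulerProd R k * eulerProd R (2 * m + k + 1) =
      (-1) ^ m * X ^ (m * (m + 1) / 2) * eulerProd R (2 * (m + k) + 1) := by
  obtain ⟨n, hn⟩ : ∃ n, n = m + k := ⟨_, rfl⟩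
  induction n generalizing m k with
  | zero =>
    obtain ⟨rfl, rfl⟩ : m = 0 ∧ k = 0 := by lia
    simp [jacobiCoeff]
  | succ n ih =>
    have ih' (a b : ℕ) (h : n = a + b) : jacobiCoeff R n (a + 1) * eulerProd R b *
        eulerProd R (2 * a + b + 2) = (-1) ^ (a + 1) * X ^ (a * (a + 1) / 2 + a + 1) *
          eulerProd R (2 * n + 1) * (1 - X ^ b) := by
      obtain _ | b := b
      · simp [jacobiCoeff_eq_zero (by lia : n < a + 1)]
      · have := ih (a + 1) b (by lia)
        rw [show a + 1 + b = n by lia, triangle_succ,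
          show 2 * (a + 1) + b + 1 = 2 * a + (b + 1) + 2 by lia] at this
        rw [eulerProd_succ b]
        linear_combination (1 - X ^ (b + 1)) * this
    rw [← hn, show 2 * (n + 1) + 1 = 2 * n + 1 + 1 + 1 by ring, eulerProd_succ (2 * n + 1 + 1),
      eulerProd_succ (2 * n + 1)]
    obtain _ | m := m
    · obtain rfl : k = n + 1 := by lia
      have h₀ := ih 0 n (by lia)
      have h₁ := ih' 0 n (by lia)
      simp only [zero_add, mul_zero, Nat.zero_div, pow_zero, mul_one, one_mul, pow_one] at h₀ h₁ ⊢
      rw [eulerProd_succ (n + 1)] at h₁ ⊢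
      rw [eulerProd_succ n] at h₀ h₁ ⊢
      rw [jacobiCoeff]
      linear_combination (1 + X ^ (n + 1) + (X ^ (n + 1)) ^ 2) * (1 - X ^ (n + 1))
        * (1 - X ^ (n + 1 + 1)) * h₀ - X ^ (n + 1) * (1 - X ^ (n + 1)) * h₁
    · obtain rfl : n = m + k := by lia
      have hA := ih' m k rfl
      have hB := ih m k rfl
      have hC : jacobiCoeff R (m + k) (m + 2) * eulerProd R k * eulerProd R (2 * m + k + 3) * X =
          (-1) ^ m * X ^ (m * (m + 1) / 2 + 2 * m + 3) *
            eulerProd R (2 * (m + k) + 1) * (1 - X ^ k) * (X - X ^ k) := by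
        obtain _ | k := k
        · simp [jacobiCoeff_eq_zero (by lia : m < m + 2)]
        · have := ih' (m + 1) k (by lia)
          rw [triangle_succ, show 2 * (m + 1) + k + 2 = 2 * m + (k + 1) + 3 by lia] at this
          rw [eulerProd_succ k]
          linear_combination (1 - X ^ (k + 1)) * X * this
      rw [show 2 * (m + 1) + k + 1 = 2 * m + k + 2 + 1 by ring, triangle_succ, jacobiCoeff]
      rw [show 2 * m + k + 3 = 2 * m + k + 2 + 1 by ring] at hC
      rw [eulerProd_succ (2 * m + k + 2)] at hC ⊢
      rw [show 2 * m + k + 2 = 2 * m + k + 1 + 1 by ring] at hA hC ⊢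
      rw [eulerProd_succ (2 * m + k + 1)] at hA hC ⊢
      linear_combination (1 + (X ^ (m + k + 1)) ^ 2) * (1 - X ^ (2 * m + k + 3)) * hA
        - X ^ (m + k + 1) * (1 - X ^ (2 * m + k + 2)) * (1 - X ^ (2 * m + k + 3)) * hB
        - X ^ (m + k) * hC

/-- A truncated form of Jacobi's identity for the cube of the Euler product. -/
lemma X_pow_dvd_eulerProd_pow_three_sub (n : ℕ) :
    X ^ (n + 1) ∣ eulerProd R n ^ 3 - jacobiSum R (n + 1) := by
  rw [pow_succ' (eulerProd R n), ← sum_jacobiCoeff, mul_sum, jacobiSum, ← sum_sub_distrib]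
  refine dvd_sum fun m hm ↦ ?_
  obtain ⟨k, rfl⟩ := Nat.exists_eq_add_of_le (Nat.lt_succ_iff.mp (mem_range.mp hm))
  have hunit := (isUnit_eulerProd (R := R) k).mul (isUnit_eulerProd (2 * m + k + 1))
  rw [← hunit.dvd_mul_right]
  have e : (eulerProd R (m + k) * ((2 * m + 1 : R⟦X⟧) * jacobiCoeff R (m + k) m)
        - C ((-1) ^ m * (2 * m + 1) : R) * X ^ (m * (m + 1) / 2))
        * (eulerProd R k * eulerProd R (2 * m + k + 1)) =
      X ^ (m * (m + 1) / 2) * (((-1) ^ m * (2 * m + 1) : R⟦X⟧) *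
        ((eulerProd R (m + k) - eulerProd R k) * eulerProd R (2 * (m + k) + 1)
        + eulerProd R k * ((eulerProd R (2 * (m + k) + 1) - eulerProd R k)
        - (eulerProd R (2 * m + k + 1) - eulerProd R k)))) := by
    simp only [map_mul, map_pow, map_neg, map_one, map_add, map_natCast, map_ofNat]
    linear_combination eulerProd R (m + k) * (2 * m + 1) * jacobiCoeff_mul_eulerProd (R := R) m k
  have hle : m ≤ m * (m + 1) / 2 := by
    rw [Nat.le_div_iff_mul_le two_pos]
    obtain _ | m := m
    · simp
    · gcongr; lia
  rw [e]
  refine (pow_dvd_pow X (by lia : m + k + 1 ≤ m * (m + 1) / 2 + (k + 1))).trans ?_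
  rw [pow_add]
  refine mul_dvd_mul_left _ (dvd_mul_of_dvd_right (dvd_add ?_ ?_) _)
  · exact dvd_mul_of_dvd_left (X_pow_dvd_eulerProd_sub (by lia)) _
  · exact dvd_mul_of_dvd_right
      (dvd_sub (X_pow_dvd_eulerProd_sub (by lia)) (X_pow_dvd_eulerProd_sub (by lia))) _

end Jacobi

section Partition

open Filter
open scoped PowerSeries.WithPiTopology

lemma X_pow_dvd_pentagonalSeries_sub (R : Type*) [CommRing R] (n : ℕ) :
    X ^ (n + 1) ∣ pentagonalSeries R - eulerProd R n := by
  rw [X_pow_dvd_iff]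
  intro d hd
  obtain ⟨M, hM, hn⟩ := ((tendsto_finset_range.eventually
    (coeff_prod_one_sub_X_pow_eventually_eq R d)).and (eventually_ge_atTop n)).exists
  rw [map_sub, ← hM, ← map_sub]
  exact X_pow_dvd_iff.mp (X_pow_dvd_eulerProd_sub hn) d hd

lemma mk_card_partition_mul_pentagonalSeries (R : Type*) [CommRing R] :
    (PowerSeries.mk fun n ↦ (Fintype.card n.Partition : R)) * pentagonalSeries R = 1 := by
  let _ : TopologicalSpace R := ⊥
  have _ : DiscreteTopology R := ⟨rfl⟩
  have h := (Nat.Partition.hasProd_powerSeriesMk_card_restricted R fun _ ↦ True).mul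
    (WithPiTopology.hasProd_one_sub_X_pow R)
  simp only [if_true, pow_mul] at h
  conv at h in fun b ↦ _ =>
    ext b
    rw [WithPiTopology.tsum_pow_mul_one_sub_of_constantCoeff_eq_zero (by simp)]
  simpa [Nat.Partition.restricted] using h.unique hasProd_one

end Partition

section ModSeven

lemma eulerProd_pow_seven (n : ℕ) :
    eulerProd (ZMod 7) n ^ 7 = expand 7 (by simp) (eulerProd (ZMod 7) n) := by
  have : Fact (Nat.Prime 7) := ⟨by norm_num⟩
  have : CharP (ZMod 7)⟦X⟧ 7 := charP_of_injective_algebraMap (C_injective) 7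
  simp only [eulerProd, ← prod_pow, map_prod, map_sub, map_one, map_pow, expand_X, sub_pow_char,
    one_pow, ← pow_mul, mul_comm]

lemma weight_mul_weight_eq_zero {a b n : ℕ}
    (h : a * (a + 1) / 2 + b * (b + 1) / 2 = 7 * n + 5) :
    ((2 * a + 1) * (2 * b + 1) : ZMod 7) = 0 := by
  have ha := Nat.div_mul_cancel (Nat.even_mul_succ_self a).two_dvd
  have hb := Nat.div_mul_cancel (Nat.even_mul_succ_self b).two_dvd
  have key : ((2 * a + 1) ^ 2 + (2 * b + 1) ^ 2 : ZMod 7) = 0 := by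
    have : (2 * a + 1) ^ 2 + (2 * b + 1) ^ 2 = 7 * (8 * n + 6) := by nlinarith
    have h7 : (7 : ZMod 7) = 0 := rfl
    have := congrArg (Nat.cast : ℕ → ZMod 7) this
    push_cast at this
    rw [this, h7, zero_mul]
  generalize (2 * a + 1 : ZMod 7) = x at *
  generalize (2 * b + 1 : ZMod 7) = y at *
  decide +revert

lemma coeff_jacobiSum_sq_eq_zero (N n : ℕ) :
    coeff (7 * n + 5) (jacobiSum (ZMod 7) N ^ 2) = 0 := by
  rw [jacobiSum, sq, sum_mul_sum, map_sum]
  refine sum_eq_zero fun a _ ↦ ?_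
  rw [map_sum]
  refine sum_eq_zero fun b _ ↦ ?_
  rw [mul_mul_mul_comm, ← map_mul, ← pow_add, coeff_C_mul, coeff_X_pow]
  split_ifs with h
  · linear_combination (-1) ^ a * (-1) ^ b * weight_mul_weight_eq_zero h.symm
  · simp

lemma coeff_mul_expand_eq_zero {f : (ZMod 7)⟦X⟧} (hf : ∀ n, coeff (7 * n + 5) f = 0)
    (g : (ZMod 7)⟦X⟧) (n : ℕ) : coeff (7 * n + 5) (f * expand 7 (by simp) g) = 0 := by
  rw [coeff_mul]
  refine sum_eq_zero fun ⟨i, j⟩ hij ↦ ?_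
  rw [HasAntidiagonal.mem_antidiagonal] at hij
  by_cases hj : 7 ∣ j
  · obtain ⟨k, rfl⟩ := hj
    obtain rfl : i = 7 * (n - k) + 5 := by lia
    simp [hf]
  · simp [coeff_expand_of_not_dvd _ _ _ hj]

end ModSeven

end RamanujanCongruence

open RamanujanCongruence in
/-- Ramanujan's congruence: `p(7n+5) ≡ 0 (mod 7)`, where the partition function
`p(m)` is the number of partitions of `m`. -/
theorem ramanujan_congruence_mod_seven (n : ℕ) :
    Nat.card (Nat.Partition (7 * n + 5)) % 7 = 0 := by
  rw [← Nat.dvd_iff_mod_eq_zero, ← ZMod.natCast_eq_zero_iff, Nat.card_eq_fintype_card]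
  set N := 7 * n + 5 with hN
  set P : (ZMod 7)⟦X⟧ := PowerSeries.mk fun n ↦ (Fintype.card n.Partition : ZMod 7) with hP
  set Q := eulerProd (ZMod 7) N
  set J := jacobiSum (ZMod 7) (N + 1)
  obtain ⟨V, hV⟩ := (isUnit_eulerProd (R := ZMod 7) N).exists_right_inv
  have hU : Q ^ 7 * expand 7 (by simp) V = 1 := by
    rw [eulerProd_pow_seven, ← map_mul, hV, map_one]
  have hPQ : P * pentagonalSeries (ZMod 7) = 1 := mk_card_partition_mul_pentagonalSeries _
  have hdvd : X ^ (N + 1) ∣ P - J ^ 2 * expand 7 (by simp) V := by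
    have e : P - J ^ 2 * expand 7 (by simp) V =
        ((Q ^ 3 - J) * (Q ^ 3 + J) - (pentagonalSeries (ZMod 7) - Q) * (P * Q ^ 6))
          * expand 7 (by simp) V := by
      linear_combination (-P) * hU + Q ^ 6 * expand 7 (by simp) V * hPQ
    rw [e]
    exact dvd_mul_of_dvd_left (dvd_sub
      (dvd_mul_of_dvd_left (X_pow_dvd_eulerProd_pow_three_sub N) _)
      (dvd_mul_of_dvd_left (X_pow_dvd_pentagonalSeries_sub _ N) _)) _
  have h := X_pow_dvd_iff.mp hdvd N (by lia)
  rwa [map_sub, coeff_mul_expand_eq_zero (coeff_jacobiSum_sq_eq_zero _), sub_zero, hP,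
    coeff_mk] at h
end

section
/- For every nonnegative integer n, p(11n+6) ≡ 0 (mod 11). -/
open PowerSeries Finset

/-! ### Gaussian binomial coefficients -/

section GaussBinom

variable {R : Type*} [CommRing R]

/-- The product `(1 - q)(1 - q²)⋯(1 - qⁿ)`. -/
def qFactorial (q : R) (n : ℕ) : R := ∏ i ∈ range n, (1 - q ^ (i + 1))

/-- The Gaussian binomial coefficient, defined by the `q`-Pascal rule. -/
def gaussBinom (q : R) : ℕ → ℕ → R
  | _, 0 => 1
  | 0, _ + 1 => 0
  | m + 1, j + 1 => gaussBinom q m j + q ^ (j + 1) * gaussBinom q m (j + 1)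

@[simp]
lemma gaussBinom_zero_right (q : R) (m : ℕ) : gaussBinom q m 0 = 1 := by
  cases m <;> rfl

lemma gaussBinom_succ_succ (q : R) (m j : ℕ) :
    gaussBinom q (m + 1) (j + 1) = gaussBinom q m j + q ^ (j + 1) * gaussBinom q m (j + 1) := rfl

lemma gaussBinom_eq_zero_of_lt (q : R) {m j : ℕ} (h : m < j) : gaussBinom q m j = 0 := by
  induction m generalizing j with
  | zero => obtain ⟨j, rfl⟩ := Nat.exists_eq_add_one.2 h; rfl
  | succ m ih =>
    obtain ⟨j, rfl⟩ := Nat.exists_eq_add_one.2 (Nat.zero_lt_of_lt h)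
    rw [gaussBinom_succ_succ, ih (by omega), ih (by omega)]
    simp

lemma qFactorial_succ (q : R) (n : ℕ) :
    qFactorial q (n + 1) = qFactorial q n * (1 - q ^ (n + 1)) :=
  prod_range_succ _ _

lemma gaussBinom_add_mul (q : R) (i j : ℕ) :
    gaussBinom q (i + j) j * (qFactorial q i * qFactorial q j) = qFactorial q (i + j) := by
  induction h : i + j generalizing i j with
  | zero =>
    obtain ⟨rfl, rfl⟩ : i = 0 ∧ j = 0 := by omega
    simp [qFactorial]
  | succ m ih =>
    rcases j with _ | j
    · obtain rfl : i = m + 1 := by omega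
      simp [qFactorial]
    rw [gaussBinom_succ_succ, qFactorial_succ q m, qFactorial_succ q j]
    have h₁ := ih i j (by omega)
    rcases i with _ | i
    · obtain rfl : m = j := by omega
      rw [gaussBinom_eq_zero_of_lt q (Nat.lt_succ_self m)]
      linear_combination (1 - q ^ (m + 1)) * h₁
    · have h₂ := ih i (j + 1) (by omega)
      have hm : q ^ (m + 1) = q ^ (j + 1) * q ^ (i + 1) := by rw [← pow_add]; congr 1; omega
      rw [qFactorial_succ] at h₁ h₂ ⊢
      linear_combination (1 - q ^ (j + 1)) * h₁ + q ^ (j + 1) * (1 - q ^ (i + 1)) * h₂ +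
        qFactorial q m * hm

lemma Nat.succ_choose_two (j : ℕ) : (j + 1).choose 2 = j.choose 2 + j := by
  rw [Nat.choose_succ_succ' j 1, Nat.choose_one_right, add_comm]

lemma Nat.add_choose_two (a b : ℕ) : (a + b).choose 2 = a.choose 2 + b.choose 2 + a * b := by
  induction b with
  | zero => simp
  | succ b ih =>
    rw [← add_assoc, Nat.succ_choose_two, Nat.succ_choose_two, ih]
    ring

lemma Nat.mul_self_eq_two_mul_choose_two_add (k : ℕ) : k * k = 2 * k.choose 2 + k := by
  induction k with
  | zero => simp
  | succ k ih =>
    rw [Nat.succ_choose_two]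
    linarith

/-- The finite `q`-binomial theorem in homogeneous form. -/
theorem prod_sub_mul_pow_eq_sum_gaussBinom (q x y : R) (m : ℕ) :
    ∏ i ∈ range m, (x - y * q ^ i) =
      ∑ j ∈ range (m + 1),
        (-1) ^ j * q ^ j.choose 2 * gaussBinom q m j * y ^ j * x ^ (m - j) := by
  induction m generalizing y with
  | zero => simp
  | succ m ih =>
    have hprod : ∏ i ∈ range (m + 1), (x - y * q ^ i) =
        (∏ i ∈ range m, (x - y * q * q ^ i)) * (x - y) := by
      rw [prod_range_succ']
      simp [pow_succ', mul_assoc]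
    have hx : x * ∏ i ∈ range m, (x - y * q * q ^ i) = x ^ (m + 1) +
        ∑ j ∈ range (m + 1), (-1) ^ (j + 1) * q ^ (j + 1).choose 2 *
          (q ^ (j + 1) * gaussBinom q m (j + 1)) * y ^ (j + 1) * x ^ (m - j) := by
      rw [ih, sum_range_succ', sum_range_succ, gaussBinom_eq_zero_of_lt q (Nat.lt_succ_self m),
        mul_add, mul_sum, add_comm]
      simp only [mul_zero, zero_mul, add_zero]
      congr 1
      · simp [pow_succ']
      · refine sum_congr rfl fun j hj ↦ ?_
        have := mem_range.1 hj
        rw [show m - j = (m - (j + 1)) + 1 by omega]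
        ring
    have hy : y * ∏ i ∈ range m, (x - y * q * q ^ i) =
        -∑ j ∈ range (m + 1), (-1) ^ (j + 1) * q ^ (j + 1).choose 2 *
          gaussBinom q m j * y ^ (j + 1) * x ^ (m - j) := by
      rw [ih, mul_sum, ← sum_neg_distrib]
      refine sum_congr rfl fun j _ ↦ ?_
      rw [Nat.succ_choose_two]
      ring
    have hpascal : ∑ j ∈ range (m + 1), (-1) ^ (j + 1) * q ^ (j + 1).choose 2 *
          gaussBinom q (m + 1) (j + 1) * y ^ (j + 1) * x ^ (m + 1 - (j + 1)) =
        ∑ j ∈ range (m + 1), (-1) ^ (j + 1) * q ^ (j + 1).choose 2 *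
          (q ^ (j + 1) * gaussBinom q m (j + 1)) * y ^ (j + 1) * x ^ (m - j) +
        ∑ j ∈ range (m + 1), (-1) ^ (j + 1) * q ^ (j + 1).choose 2 *
          gaussBinom q m j * y ^ (j + 1) * x ^ (m - j) := by
      rw [← sum_add_distrib]
      refine sum_congr rfl fun j _ ↦ ?_
      rw [gaussBinom_succ_succ, Nat.add_sub_add_right]
      ring
    rw [hprod, sum_range_succ', hpascal, gaussBinom_zero_right, Nat.choose_zero_succ]
    simp only [pow_zero, Nat.sub_zero]
    linear_combination hx - hy

lemma map_gaussBinom {S : Type*} [CommRing S] (φ : R →+* S) (q : R) (m j : ℕ) :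
    φ (gaussBinom q m j) = gaussBinom (φ q) m j := by
  induction m generalizing j with
  | zero => cases j <;> simp [gaussBinom]
  | succ m ih => cases j <;> simp [gaussBinom, ih]

/-- The derivative of the finite `q`-binomial theorem at the middle root. -/
lemma qFactorial_sq_mul_eq_sum (q : R) (n : ℕ) :
    (-1) ^ n * q ^ (n.choose 2 + n * n) * qFactorial q n ^ 2 =
      ∑ j ∈ range (2 * n + 2), (-1) ^ j * q ^ j.choose 2 * gaussBinom q (2 * n + 1) j *
        ((2 * n + 1 - j : ℕ) * (q ^ n) ^ (2 * n - j)) := by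
  have key : ∏ i ∈ range (2 * n + 1), (Polynomial.X - Polynomial.C (q ^ i)) =
      ∑ j ∈ range (2 * n + 2), Polynomial.C ((-1) ^ j * q ^ j.choose 2 *
        gaussBinom q (2 * n + 1) j) * Polynomial.X ^ (2 * n + 1 - j) := by
    have h := prod_sub_mul_pow_eq_sum_gaussBinom (Polynomial.C q) Polynomial.X 1 (2 * n + 1)
    simpa [← map_gaussBinom] using h
  have hsplit : ∏ i ∈ range (2 * n + 1), (Polynomial.X - Polynomial.C (q ^ i)) =
      (Polynomial.X - Polynomial.C (q ^ n)) *
        ((∏ i ∈ range n, (Polynomial.X - Polynomial.C (q ^ i))) *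
          ∏ i ∈ range n, (Polynomial.X - Polynomial.C (q ^ (n + 1 + i)))) := by
    rw [show 2 * n + 1 = n + 1 + n by ring, prod_range_add, prod_range_succ]
    ring
  have hlow : ∏ i ∈ range n, (q ^ n - q ^ i) = (-1) ^ n * q ^ n.choose 2 * qFactorial q n := by
    have h := prod_pow_eq_pow_sum (range n) (fun i ↦ i) q
    rw [sum_range_id, ← Nat.choose_two_right] at h
    rw [← h, ← prod_range_reflect, ← prod_range_reflect (fun i ↦ q ^ i), qFactorial,
      show (-1 : R) ^ n = ∏ _i ∈ range n, (-1 : R) by simp, ← prod_mul_distrib, ← prod_mul_distrib]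
    refine prod_congr rfl fun i hi ↦ ?_
    have : n = (n - 1 - i) + (i + 1) := by have := mem_range.1 hi; omega
    have : q ^ n = q ^ (n - 1 - i) * q ^ (i + 1) := by rw [← pow_add, ← this]
    rw [this]
    ring
  have hhigh : ∏ i ∈ range n, (q ^ n - q ^ (n + 1 + i)) = q ^ (n * n) * qFactorial q n := by
    rw [pow_mul, show (q ^ n) ^ n = ∏ _i ∈ range n, q ^ n by simp, qFactorial, ← prod_mul_distrib]
    exact prod_congr rfl fun i _ ↦ by ring
  have h := congrArg (fun p ↦ (Polynomial.derivative p).eval (q ^ n)) (hsplit.symm.trans key)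
  simp only [Polynomial.derivative_mul, Polynomial.derivative_sum, Polynomial.eval_finsetSum,
    Polynomial.eval_add, Polynomial.eval_mul, Polynomial.eval_prod, Polynomial.eval_sub,
    Polynomial.derivative_sub, Polynomial.derivative_X, Polynomial.derivative_C,
    Polynomial.eval_X, Polynomial.eval_C, sub_self,
    sub_zero, zero_mul, add_zero, one_mul, zero_add, Polynomial.derivative_X_pow,
    Polynomial.eval_pow, hlow, hhigh] at h
  rw [pow_add]
  refine Eq.trans (by ring) (h.trans (sum_congr rfl fun j _ ↦ ?_))
  rw [show 2 * n + 1 - j - 1 = 2 * n - j by omega]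

/-- A finite form of Jacobi's identity for the cube of the Euler product. -/
theorem qFactorial_sq_eq_sum {q : R} (hq : IsLeftRegular q) (n : ℕ) :
    qFactorial q n ^ 2 = ∑ k ∈ range (n + 1), (-1) ^ k * q ^ (k + 1).choose 2 *
      ((n + 1 + k : ℕ) * gaussBinom q (2 * n + 1) (n - k) -
        (n - k : ℕ) * gaussBinom q (2 * n + 1) (n + 1 + k)) := by
  refine (hq.pow (n.choose 2 + n * n)) ?_
  have h := congrArg (fun a ↦ (-1) ^ n * a) (qFactorial_sq_mul_eq_sum q n)
  have hs : ((-1 : R) ^ n) * (-1) ^ n = 1 := by rw [← mul_pow]; simp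
  simp only [← mul_assoc, hs, one_mul] at h
  simp only [h]
  rw [show 2 * n + 2 = n + 1 + (n + 1) by ring, sum_range_add, ← sum_range_reflect,
    ← sum_add_distrib, mul_sum, mul_sum]
  refine sum_congr rfl fun k hk ↦ ?_
  obtain ⟨m, rfl⟩ := Nat.exists_eq_add_of_le (Nat.lt_succ_iff.1 (mem_range.1 hk))
  rw [show k + m + 1 - 1 - k = m by omega, show k + m - k = m by omega,
    show 2 * (k + m) + 1 - m = k + m + 1 + k by omega,
    show 2 * (k + m) + 1 - (k + m + 1 + k) = m by omega]
  have hsq := Nat.mul_self_eq_two_mul_choose_two_add k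
  have hlow : m.choose 2 + (k + m) * (2 * (k + m) - m) =
      (k + m).choose 2 + (k + m) * (k + m) + (k + 1).choose 2 := by
    rw [Nat.add_choose_two k m, Nat.succ_choose_two, show 2 * (k + m) - m = 2 * k + m by omega]
    linarith
  have hsign : (-1 : R) ^ (k + m) * (-1) ^ m = (-1) ^ k := by
    rw [pow_add, mul_assoc, ← mul_pow]
    simp
  have hsign' : (-1 : R) ^ (k + m) * (-1) ^ (k + m + 1 + k) = -(-1) ^ k := by
    rw [← hsign, show k + m + 1 + k = m + 1 + (k + k) by ring, pow_add _ (m + 1),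
      Even.neg_one_pow ⟨k, rfl⟩]
    ring
  have hhigh : (m : R) * (q ^ (k + m + 1 + k).choose 2 *
      (q ^ (k + m)) ^ (2 * (k + m) - (k + m + 1 + k))) =
      m * (q ^ ((k + m).choose 2 + (k + m) * (k + m)) * q ^ (k + 1).choose 2) := by
    rcases m with _ | m
    · simp
    rw [← pow_mul, ← pow_add, ← pow_add, show k + (m + 1) + 1 + k = k + (m + 1) + (k + 1) by ring,
      show 2 * (k + (m + 1)) - (k + (m + 1) + (k + 1)) = m by omega,
      Nat.add_choose_two (k + (m + 1)) (k + 1)]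
    ring_nf
  have hlow' : q ^ m.choose 2 * (q ^ (k + m)) ^ (2 * (k + m) - m) =
      q ^ ((k + m).choose 2 + (k + m) * (k + m)) * q ^ (k + 1).choose 2 := by
    rw [← pow_mul, ← pow_add, ← pow_add, hlow]
  linear_combination
    (-1) ^ (k + m) * (-1) ^ m * gaussBinom q (2 * (k + m) + 1) m * (k + m + 1 + k : ℕ) * hlow' +
    (-1) ^ (k + m) * (-1) ^ (k + m + 1 + k) * gaussBinom q (2 * (k + m) + 1) (k + m + 1 + k) *
      hhigh +
    q ^ ((k + m).choose 2 + (k + m) * (k + m)) * q ^ (k + 1).choose 2 *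
      (gaussBinom q (2 * (k + m) + 1) m * (k + m + 1 + k : ℕ) * hsign +
        gaussBinom q (2 * (k + m) + 1) (k + m + 1 + k) * m * hsign')

end GaussBinom

/-! ### Residue parts of power series -/

section ResiduePart

variable {R : Type*} [CommRing R]

/-- The part of a power series supported on the exponents `n` with `n % m = r`. -/
noncomputable def residuePart (m r : ℕ) (f : R⟦X⟧) : R⟦X⟧ :=
  PowerSeries.mk fun n ↦ if n % m = r then coeff n f else 0

variable {m r : ℕ}

lemma coeff_residuePart (m r : ℕ) (f : R⟦X⟧) (n : ℕ) :
    coeff n (residuePart m r f) = if n % m = r then coeff n f else 0 :=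
  coeff_mk _ _

lemma residuePart_eq_zero {f : R⟦X⟧} (h : ∀ n : ℕ, n % m = r → coeff n f = 0) :
    residuePart m r f = 0 := by
  ext n
  simpa [coeff_residuePart] using h n

lemma Nat.add_mod_eq_iff_mod_eq_sub {a b : ℕ} (hr : r < m) :
    (a + b) % m = r ↔ b % m = (r + (m - a % m)) % m := by
  have ha : a % m ≤ m := (Nat.mod_lt a (Nat.zero_lt_of_lt hr)).le
  conv_lhs => rw [← Nat.mod_eq_of_lt hr]
  rw [← ZMod.natCast_eq_natCast_iff', ← ZMod.natCast_eq_natCast_iff']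
  push_cast [Nat.cast_sub ha]
  simp only [ZMod.natCast_self, zero_sub, ZMod.natCast_mod]
  exact ⟨fun h ↦ by rw [← h]; ring, fun h ↦ by rw [h]; ring⟩

lemma residuePart_mul (hr : r < m) (f g : R⟦X⟧) :
    residuePart m r (f * g) =
      ∑ s ∈ range m, residuePart m s f * residuePart m ((r + (m - s)) % m) g := by
  ext n
  simp only [coeff_residuePart, map_sum, coeff_mul]
  have hm : 0 < m := Nat.zero_lt_of_lt hr
  have hterm : ∀ p ∈ antidiagonal n,
      (∑ s ∈ range m, (if p.1 % m = s then coeff p.1 f else 0) *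
        if p.2 % m = (r + (m - s)) % m then coeff p.2 g else 0) =
      if n % m = r then coeff p.1 f * coeff p.2 g else 0 := by
    intro p hp
    rw [sum_eq_single_of_mem (p.1 % m) (mem_range.2 (Nat.mod_lt _ hm))
      (fun s _ hs ↦ by simp [hs.symm]), ← mem_antidiagonal.1 hp]
    simp [Nat.add_mod_eq_iff_mod_eq_sub hr]
  rw [sum_comm, sum_congr rfl hterm]
  split_ifs <;> simp

/-- Multiplication by a series in `X ^ m` commutes with taking residue parts. -/
lemma residuePart_mul_of_support {g : R⟦X⟧} (hg : ∀ n : ℕ, n % m ≠ 0 → coeff n g = 0)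
    (hr : r < m) (f : R⟦X⟧) : residuePart m r (f * g) = residuePart m r f * g := by
  have hzero : residuePart m 0 g = g := by
    ext n
    rw [coeff_residuePart]
    split_ifs with h
    · rfl
    · exact (hg n h).symm
  rw [residuePart_mul hr, sum_eq_single_of_mem r (mem_range.2 hr), show r + (m - r) = m by omega,
    Nat.mod_self, hzero]
  intro s hs hsr
  rw [residuePart_eq_zero (f := g), mul_zero]
  have hs := mem_range.1 hs
  refine fun n hn ↦ hg n fun h0 ↦ hsr ?_
  have h := (Nat.add_mod_eq_iff_mod_eq_sub (a := s) (b := n) hr).2 (by rw [Nat.mod_eq_of_lt hs, hn])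
  rwa [Nat.add_mod, h0, add_zero, Nat.mod_mod, Nat.mod_eq_of_lt hs] at h

end ResiduePart

lemma coeff_pow_char_eq_zero {p : ℕ} [Fact p.Prime] (f : (ZMod p)⟦X⟧) {n : ℕ}
    (hn : n % p ≠ 0) : coeff n (f ^ p) = 0 := by
  rcases n with _ | n
  · simp at hn
  have hp : (p : (ZMod p)⟦X⟧) = 0 := by
    rw [← map_natCast (C (R := ZMod p)), ZMod.natCast_self, map_zero]
  have h := coeff_derivative (f ^ p) n
  rw [derivative_pow, hp, zero_mul, zero_mul, map_zero] at h
  refine (mul_eq_zero.1 h.symm).resolve_right fun h0 ↦ hn ?_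
  exact Nat.mod_eq_zero_of_dvd ((ZMod.natCast_eq_zero_iff _ _).1 (by exact_mod_cast h0))

/-- In characteristic `11`, the residue-`6` part of `f ^ 7` lies in the ideal generated by the
missing residue parts of `f ^ 4` when `f` is supported on residues of triangular numbers. -/
lemma residuePart_six_pow_seven_eq_zero {R : Type*} [CommRing R] (h11 : (11 : R⟦X⟧) = 0) (f : R⟦X⟧)
    (hf : ∀ r ∈ ({2, 4, 5, 7, 8, 9} : Finset ℕ), residuePart 11 r f = 0)
    (hf4 : ∀ r ∈ ({3, 6, 8, 9, 10} : Finset ℕ), residuePart 11 r (f ^ 4) = 0) :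
    residuePart 11 6 (f ^ 7) = 0 := by
  have hmul {r : ℕ} (hr : r < 11) (g h : R⟦X⟧) := residuePart_mul hr g h
  simp only [sum_range_succ, sum_range_zero, zero_add] at hmul
  simp only [mem_insert, mem_singleton, forall_eq_or_imp, forall_eq] at hf hf4
  obtain ⟨z2, z4, z5, z7, z8, z9⟩ := hf
  have expand2 {r : ℕ} (hr : r < 11) := hmul hr f f
  have expand3 {r : ℕ} (hr : r < 11) := hmul hr f (f * f)
  have expand4 {r : ℕ} (hr : r < 11) := hmul hr (f * f) (f * f)
  simp only [z2, z4, z5, z7, z8, z9, zero_mul, add_zero] at expand2 expand3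
  have hpow4 : f ^ 4 = f * f * (f * f) := by ring
  have hpow7 : f ^ 7 = (f * f * (f * f)) * (f * (f * f)) := by ring
  rw [hpow4] at hf4
  obtain ⟨h3, h6, h8, h9, h10⟩ := hf4
  have h7 := hmul (show 6 < 11 by norm_num) (f * f * (f * f)) (f * (f * f))
  simp only [expand4, expand3, expand2, Nat.reduceLT, Nat.reduceAdd, Nat.reduceSub, Nat.reduceMod,
    z2, z4, z5, z7, z8, z9, mul_zero, add_zero, zero_add] at h3 h6 h8 h9 h10 h7
  rw [hpow7, h7]
  generalize residuePart 11 0 f = a at *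
  generalize residuePart 11 1 f = b at *
  generalize residuePart 11 3 f = c at *
  generalize residuePart 11 6 f = d at *
  generalize residuePart 11 10 f = e at *
  linear_combination
    (-b * c * e - b ^ 3 + 4 * a ^ 2 * c) * h3 +
    (4 * d ^ 2 * e - a * b * e - a ^ 3) * h6 +
    (-c ^ 3 + 4 * a * e ^ 2 - a * c * d) * h8 +
    (-e ^ 3 - c * d * e + 4 * b ^ 2 * d) * h9 +
    (-d ^ 3 + 4 * b * c ^ 2 - a * b * d) * h10 +
    (d ^ 5 * e ^ 2 + c * d ^ 6 + c ^ 6 * e + b * e ^ 6 + 22 * b * c * d * e ^ 4 +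
      54 * b * c ^ 2 * d ^ 2 * e ^ 2 + 12 * b * c ^ 3 * d ^ 3 + b ^ 2 * c ^ 5 +
      12 * b ^ 3 * d * e ^ 3 + 30 * b ^ 3 * c * d ^ 2 * e + b ^ 5 * d ^ 2 +
      12 * a * c ^ 3 * e ^ 3 + 22 * a * c ^ 4 * d * e + 30 * a * b * d ^ 3 * e ^ 2 +
      22 * a * b * c * d ^ 4 + 54 * a * b ^ 2 * c ^ 2 * e ^ 2 + 30 * a * b ^ 2 * c ^ 3 * d +
      22 * a * b ^ 4 * c * e + a * b ^ 6 + a ^ 2 * e ^ 5 + 30 * a ^ 2 * c * d * e ^ 3 +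
      54 * a ^ 2 * c ^ 2 * d ^ 2 * e + 54 * a ^ 2 * b ^ 2 * d * e ^ 2 +
      54 * a ^ 2 * b ^ 2 * c * d ^ 2 + 12 * a ^ 3 * d ^ 3 * e + 30 * a ^ 3 * b * c ^ 2 * e +
      12 * a ^ 3 * b ^ 3 * c + 22 * a ^ 4 * b * d * e + a ^ 5 * c ^ 2 + a ^ 6 * d) * h11

/-! ### The Euler product and its cube -/

section Euler

variable (R : Type*) [CommRing R]

lemma X_pow_dvd_qFactorial_sub {N n : ℕ} (h : N ≤ n) :
    (X : R⟦X⟧) ^ (N + 1) ∣ qFactorial X n - qFactorial X N := by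
  induction n, h using Nat.le_induction with
  | base => simp
  | succ n hn ih =>
    have : qFactorial (X : R⟦X⟧) (n + 1) - qFactorial X N =
        (qFactorial X n - qFactorial X N) - X ^ (n + 1) * qFactorial X n := by
      rw [qFactorial_succ]
      ring
    rw [this]
    exact dvd_sub ih ((pow_dvd_pow X (by omega)).mul_right _)

lemma X_pow_dvd_pentagonalSeries_sub_qFactorial {N n : ℕ} (h : N ≤ n) :
    (X : R⟦X⟧) ^ (N + 1) ∣ pentagonalSeries R - qFactorial X n := by
  rw [X_pow_dvd_iff]
  intro d hd
  obtain ⟨s, hs⟩ := Filter.eventually_atTop.1 (coeff_prod_one_sub_X_pow_eventually_eq R d)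
  obtain ⟨M, hM⟩ := s.exists_nat_subset_range
  have hlim := hs (range (max M n)) (hM.trans (range_mono (le_max_left M n)))
  have hdvd := X_pow_dvd_iff.1 (X_pow_dvd_qFactorial_sub R (le_max_right M n)) d (by omega)
  rw [map_sub, sub_eq_zero] at hdvd ⊢
  rw [← hlim, ← hdvd, qFactorial]

lemma isUnit_pentagonalSeries : IsUnit (pentagonalSeries R) := by
  rw [isUnit_iff_constantCoeff, ← coeff_zero_eq_constantCoeff_apply]
  have h := coeff_pentagonalSeries_pentagonal R 0
  rw [show pentagonal 0 = 0 by rfl] at h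
  simp [h]

/-- **Jacobi's identity** for the cube of the Euler product. -/
theorem coeff_pentagonalSeries_pow_three (N : ℕ) :
    coeff N (pentagonalSeries R ^ 3) =
      ∑ k ∈ range (2 * N + 1), if N = (k + 1).choose 2 then (-1) ^ k * (2 * k + 1 : R) else 0 := by
  let π := Ideal.Quotient.mk (Ideal.span {(X : R⟦X⟧) ^ (N + 1)})
  have hE {n : ℕ} (h : N ≤ n) : π (qFactorial X n) = π (pentagonalSeries R) :=
    (Ideal.Quotient.mk_eq_mk_iff_sub_mem _ _).2
      (Ideal.mem_span_singleton.2 (X_pow_dvd_pentagonalSeries_sub_qFactorial R h)) |>.symm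
  have hunit : IsUnit (π (pentagonalSeries R)) := (isUnit_pentagonalSeries R).map π
  have hbinom {i j : ℕ} (hi : N ≤ i) (hj : N ≤ j) :
      π (pentagonalSeries R) * π (gaussBinom X (i + j) j) = 1 := by
    have h := congrArg π (gaussBinom_add_mul (X : R⟦X⟧) i j)
    rw [map_mul, map_mul, hE hi, hE hj, hE (by omega)] at h
    refine hunit.mul_left_cancel ?_
    linear_combination h
  have hcube : π (pentagonalSeries R ^ 3) =
      π (∑ k ∈ range (2 * N + 1), C ((-1) ^ k * (2 * k + 1 : R)) * X ^ (k + 1).choose 2) := by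
    have h := congrArg π (qFactorial_sq_eq_sum (q := (X : R⟦X⟧)) X_mul_injective (2 * N))
    rw [map_pow, hE (by omega)] at h
    rw [map_pow, pow_succ (π (pentagonalSeries R)), h, map_sum, map_sum, sum_mul]
    refine sum_congr rfl fun k hk ↦ ?_
    have hk := mem_range.1 hk
    by_cases hkN : k ≤ N
    · have h₁ := hbinom (i := 2 * N + 1 + k) (j := 2 * N - k) (by omega) (by omega)
      have h₂ := hbinom (i := 2 * N - k) (j := 2 * N + 1 + k) (by omega) (by omega)
      rw [show 2 * N + 1 + k + (2 * N - k) = 2 * (2 * N) + 1 by omega] at h₁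
      rw [show 2 * N - k + (2 * N + 1 + k) = 2 * (2 * N) + 1 by omega] at h₂
      simp only [map_mul, map_sub, map_pow, map_neg, map_one, map_natCast, map_add, map_ofNat]
      push_cast [Nat.cast_sub (show k ≤ 2 * N by omega)]
      linear_combination (-1) ^ k * π X ^ (k + 1).choose 2 *
        ((2 * N + 1 + k) * h₁ - (2 * N - k) * h₂)
    · have hX : π (X ^ (k + 1).choose 2) = 0 := by
        refine Ideal.Quotient.eq_zero_iff_mem.2 (Ideal.mem_span_singleton.2 (pow_dvd_pow X ?_))
        rw [Nat.succ_choose_two]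
        omega
      simp [hX, -map_pow]
  have hdvd := Ideal.mem_span_singleton.1 ((Ideal.Quotient.mk_eq_mk_iff_sub_mem _ _).1 hcube)
  have hcoeff := X_pow_dvd_iff.1 hdvd N (Nat.lt_succ_self N)
  rw [map_sub, sub_eq_zero] at hcoeff
  rw [hcoeff, map_sum]
  refine sum_congr rfl fun k _ ↦ ?_
  rw [coeff_C_mul_X_pow]

open scoped PowerSeries.WithPiTopology in
/-- The generating function of the partition function is the inverse of the Euler product. -/
theorem mk_card_partition_mul_pentagonalSeries :
    (PowerSeries.mk fun n ↦ (Nat.card n.Partition : R)) * pentagonalSeries R = 1 := by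
  let _ : TopologicalSpace R := ⊥
  have _ : DiscreteTopology R := ⟨rfl⟩
  have h := (Nat.Partition.hasProd_powerSeriesMk_card_restricted R (fun _ ↦ True)).mul
    (WithPiTopology.hasProd_one_sub_X_pow R)
  have hone (i : ℕ) : (∑' j : ℕ, (X : R⟦X⟧) ^ ((i + 1) * j)) * (1 - X ^ (i + 1)) = 1 := by
    simp_rw [pow_mul]
    exact WithPiTopology.tsum_pow_mul_one_sub_of_constantCoeff_eq_zero (by simp)
  simp only [if_true, hone] at h
  simpa [Nat.Partition.restricted] using h.unique hasProd_one

end Euler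

/-! ### Residues modulo eleven -/

lemma residuePart_pentagonalSeries_eq_zero :
    ∀ r ∈ ({3, 6, 8, 9, 10} : Finset ℕ),
      residuePart 11 r (pentagonalSeries (ZMod 11)) = 0 := by
  intro r hr
  refine residuePart_eq_zero fun n hn ↦ coeff_pentagonalSeries_eq_zero _ ?_
  rintro ⟨k, rfl⟩
  have h := congrArg (Int.cast : ℤ → ZMod 11) (two_mul_natCast_pentagonal k)
  have hcast : ((pentagonal k : ℕ) : ZMod 11) = r := by
    rw [← hn, ZMod.natCast_mod]
  push_cast at h
  rw [hcast] at h
  generalize (k : ZMod 11) = x at h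
  clear hcast hn
  revert r x
  decide

lemma residuePart_pentagonalSeries_pow_three_eq_zero :
    ∀ r ∈ ({2, 4, 5, 7, 8, 9} : Finset ℕ),
      residuePart 11 r (pentagonalSeries (ZMod 11) ^ 3) = 0 := by
  intro r hr
  refine residuePart_eq_zero fun n hn ↦ ?_
  rw [coeff_pentagonalSeries_pow_three]
  refine sum_eq_zero fun k _ ↦ ?_
  split_ifs with hk
  swap
  · rfl
  have h := congrArg (Nat.cast : ℕ → ZMod 11) (Nat.mul_self_eq_two_mul_choose_two_add (k + 1))
  have hcast : (((k + 1).choose 2 : ℕ) : ZMod 11) = r := by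
    rw [← hk, ← hn, ZMod.natCast_mod]
  push_cast at h
  rw [hcast] at h
  suffices (2 * k + 1 : ZMod 11) = 0 by rw [this, mul_zero]
  generalize (k : ZMod 11) = x at h ⊢
  clear hcast hn hk
  revert r x
  decide

/-- Ramanujan's congruence: `p(11n+6) ≡ 0 (mod 11)`, where the partition function
`p(m)` is the number of partitions of `m`. -/
theorem ramanujan_congruence_mod_eleven (n : ℕ) :
    Nat.card (Nat.Partition (11 * n + 6)) % 11 = 0 := by
  have : Fact (Nat.Prime 11) := ⟨by norm_num⟩
  set E := pentagonalSeries (ZMod 11)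
  set P : (ZMod 11)⟦X⟧ := PowerSeries.mk fun n ↦ (Nat.card n.Partition : ZMod 11)
  have hPE : P * E = 1 := mk_card_partition_mul_pentagonalSeries (ZMod 11)
  have h11 : (11 : (ZMod 11)⟦X⟧) = 0 := by
    have h := map_ofNat (C (R := ZMod 11)) 11
    rwa [show (OfNat.ofNat 11 : ZMod 11) = 0 from rfl, map_zero, eq_comm] at h
  have hseven : residuePart 11 6 ((E ^ 3) ^ 7) = 0 := by
    refine residuePart_six_pow_seven_eq_zero h11 _
      residuePart_pentagonalSeries_pow_three_eq_zero fun r hr ↦ ?_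
    have hr11 : r < 11 := by
      revert r
      decide
    rw [show (E ^ 3) ^ 4 = E * E ^ 11 by ring,
      residuePart_mul_of_support (fun n hn ↦ coeff_pow_char_eq_zero E hn) hr11,
      residuePart_pentagonalSeries_eq_zero r hr, zero_mul]
  rw [show (E ^ 3) ^ 7 = P * (E ^ 2) ^ 11 by linear_combination (-E ^ 21) * hPE,
    residuePart_mul_of_support (fun n hn ↦ coeff_pow_char_eq_zero (E ^ 2) hn) (by norm_num)]
    at hseven
  have hE : E ≠ 0 := (isUnit_pentagonalSeries (ZMod 11)).ne_zero
  have hP := (mul_eq_zero.1 hseven).resolve_right (pow_ne_zero _ (pow_ne_zero _ hE))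
  have hcoeff := congrArg (coeff (11 * n + 6)) hP
  rw [coeff_residuePart, if_pos (by omega), coeff_mk, map_zero] at hcoeff
  exact Nat.mod_eq_zero_of_dvd ((ZMod.natCast_eq_zero_iff _ _).1 hcoeff)
end
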